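/- For any pair of distributions p, q ∈ P_n and any integer i ≥ 0, it holds that half^{(i)}(p ∧ q) ≼ half^{(i)}(p) ∧ half^{(i)}(q), where half^{(i)} denotes the i-fold application of the half operator. -/

import Mathlib

/-!
The prefix sum of `half p` at `k` is the average of those of `p` at `⌊k/2⌋` and `⌈k/2⌉`, so
`half`, and hence each of its iterates, is monotone for majorization. The prefix sums of `p ∧ q`
are the minima of those of `p` and `q`; thus `p ∧ q` is below both, `half⁽ⁱ⁾(p ∧ q)` is below both
`half⁽ⁱ⁾(p)` and `half⁽ⁱ⁾(q)`, and therefore below their meet.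
-/

open Finset

/-- Sum of the first `i` components (0-indexed) of a vector; for `i ≥ n` this is the total
sum, which implements zero padding. -/
noncomputable def prefSum {n : ℕ} (p : Fin n → ℝ) (i : ℕ) : ℝ :=
  ∑ k : Fin n, if (k : ℕ) < i then p k else 0

/-- Membership in `P_n`: sorted non-increasingly, nonnegative components, summing to 1. -/
def IsProbVec {n : ℕ} (p : Fin n → ℝ) : Prop :=
  (∀ i j : Fin n, i ≤ j → p j ≤ p i) ∧ (∀ i, 0 ≤ p i) ∧ (∑ i, p i) = 1

/-- Majorization `p ≼ q` (the shorter vector being padded with zeros). -/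
def Maj {n m : ℕ} (p : Fin n → ℝ) (q : Fin m → ℝ) : Prop :=
  ∀ i : ℕ, prefSum p i ≤ prefSum q i
/-- The greatest lower bound `p ∧ q` in the majorization lattice `(P_n, ≼)`:
`z₁ = min (p₁, q₁)` and `zᵢ = min (∑_{j≤i} pⱼ, ∑_{j≤i} qⱼ) − ∑_{j<i} zⱼ`, i.e. its prefix
sums are the minima of the corresponding prefix sums of `p` and `q`. -/
noncomputable def glbVec {n : ℕ} (p q : Fin n → ℝ) : Fin n → ℝ :=
  fun i => min (prefSum p ((i : ℕ) + 1)) (prefSum q ((i : ℕ) + 1)) -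
    min (prefSum p (i : ℕ)) (prefSum q (i : ℕ))
/-- The operator `half`: `half(p) = (p₁/2, p₁/2, p₂/2, p₂/2, …, p_n/2, p_n/2) ∈ P_{2n}`. -/
noncomputable def halfVec {n : ℕ} (p : Fin n → ℝ) : Fin (2 * n) → ℝ :=
  fun i => p ⟨(i : ℕ) / 2, by have := i.isLt; omega⟩ / 2

/-- The `i`-fold application `half⁽ⁱ⁾` of the operator `half`, with `half⁽⁰⁾(p) = p`. -/
noncomputable def halfIter {n : ℕ} : (i : ℕ) → (Fin n → ℝ) → Fin (2 ^ i * n) → ℝ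
  | 0, p => fun j => p (Fin.cast (by simp) j)
  | i + 1, p => fun j => halfVec (halfIter i p) (Fin.cast (by ring) j)

lemma prefSum_zero {n : ℕ} (p : Fin n → ℝ) : prefSum p 0 = 0 := by
  simp [prefSum]

lemma prefSum_succ {n : ℕ} (p : Fin n → ℝ) (i : ℕ) :
    prefSum p (i + 1) = prefSum p i + if h : i < n then p ⟨i, h⟩ else 0 := by
  unfold prefSum
  have hsplit : ∀ k : Fin n, (if (k : ℕ) < i + 1 then p k else 0) =
      (if (k : ℕ) < i then p k else 0) + if (k : ℕ) = i then p k else 0 := by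
    intro k
    split_ifs <;> first | omega | simp
  rw [Finset.sum_congr rfl fun k _ => hsplit k, Finset.sum_add_distrib]
  congr 1
  split_ifs with h
  · rw [Finset.sum_eq_single ⟨i, h⟩]
    · simp
    · intro b _ hb
      exact if_neg fun hbi => hb (Fin.ext hbi)
    · simp
  · exact Finset.sum_eq_zero fun k _ => if_neg (by have := k.isLt; omega)

lemma prefSum_glbVec {n : ℕ} (p q : Fin n → ℝ) (i : ℕ) :
    prefSum (glbVec p q) i = min (prefSum p i) (prefSum q i) := by
  induction i with
  | zero => simp [prefSum_zero]
  | succ i ih =>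
    rw [prefSum_succ, ih]
    by_cases h : i < n
    · simp [h, glbVec]
    · simp [h, prefSum_succ]

lemma prefSum_halfVec {n : ℕ} (p : Fin n → ℝ) (k : ℕ) :
    prefSum (halfVec p) k = (prefSum p (k / 2) + prefSum p ((k + 1) / 2)) / 2 := by
  induction k with
  | zero => simp [prefSum_zero]
  | succ k ih =>
    rw [prefSum_succ, ih, show (k + 1 + 1) / 2 = k / 2 + 1 by omega, prefSum_succ p (k / 2)]
    by_cases h : k < 2 * n
    · have h' : k / 2 < n := by omega
      simp only [h, h', dif_pos, halfVec]
      ring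
    · have h' : ¬ k / 2 < n := by omega
      simp only [h, h', dif_neg, not_false_eq_true]
      ring

lemma prefSum_cast {m n : ℕ} (h : m = n) (p : Fin n → ℝ) (k : ℕ) :
    prefSum (fun j => p (Fin.cast h j)) k = prefSum p k := by
  subst h
  rfl

lemma Maj.halfIter {n : ℕ} {p q : Fin n → ℝ} (h : Maj p q) (i : ℕ) :
    Maj (halfIter i p) (halfIter i q) := by
  induction i with
  | zero =>
    intro k
    simpa only [_root_.halfIter, prefSum_cast] using h k
  | succ i ih =>
    intro k
    simp only [_root_.halfIter, prefSum_cast, prefSum_halfVec]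
    linarith [ih (k / 2), ih ((k + 1) / 2)]

/-- for any `p, q ∈ P_n` and any `i ≥ 0`,
`half⁽ⁱ⁾(p ∧ q) ≼ half⁽ⁱ⁾(p) ∧ half⁽ⁱ⁾(q)`. -/
theorem halfIter_glb_maj {n : ℕ} (p q : Fin n → ℝ)
    (hp : IsProbVec p) (hq : IsProbVec q) (i : ℕ) :
    Maj (halfIter i (glbVec p q)) (glbVec (halfIter i p) (halfIter i q)) := by
  have hl : Maj (glbVec p q) p := fun k => (prefSum_glbVec p q k).trans_le (min_le_left _ _)
  have hr : Maj (glbVec p q) q := fun k => (prefSum_glbVec p q k).trans_le (min_le_right _ _)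
  intro k
  rw [prefSum_glbVec]
  exact le_min (hl.halfIter i k) (hr.halfIter i k)
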